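/- Let n ≥ 2 and let F : ℝⁿ → ℝⁿ be a bijection satisfying F(x) = Σᵢ fᵢ(xᵢ)eᵢ for every x = (x₁, ..., xₙ) ∈ ℝⁿ, where each fᵢ : ℝ → ℝ is a bijection with fᵢ(0) = 0 and fᵢ(1) = 1. Let x₀ ∈ ℝⁿ \ {0} be a vector of the form x₀ = Σᵢ αᵢeᵢ where each αᵢ ∈ {0, 1}. Assume that F maps any line through the origin into a line, and any line through x₀ into a line. Then F(x) = x for every x ∈ ℝⁿ. -/

import Mathlib

/-- The line through `a` in direction `b`. -/
def lineThru {k : ℕ} (a b : Fin k → ℝ) : Set (Fin k → ℝ) :=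
  {x | ∃ t : ℝ, x = a + t • b}

/-- A subset of `ℝᵏ` is a line if it is of the form `a + ℝ b` with `b ≠ 0`. -/
def IsLine {k : ℕ} (s : Set (Fin k → ℝ)) : Prop :=
  ∃ a b : Fin k → ℝ, b ≠ 0 ∧ s = lineThru a b

/-!
Comparing coordinates along lines through the origin shows that all the `fᵢ` coincide with a single
multiplicative function `φ`. Lines through `x₀`, read in two coordinates one of which is `1` in
`x₀`, give a second functional equation for `t ↦ φ (1 + t) - 1`, and the two together force
`φ (1 + t) = 1 + φ t`; the signs that these equations leave open at `t = ±1` are settled by the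
fact that `φ` vanishes only at `0`. By homogeneity `φ` is then additive, so it is a ring
endomorphism, and the only one of `ℝ` is the identity.
-/

section MultiplicativeFunctions

variable {K L : Type*} [DivisionRing K]

theorem map_add_of_map_one_add [Semiring L] (φ : K →*₀ L) (h : ∀ t, φ (1 + t) = 1 + φ t)
    (x y : K) : φ (x + y) = φ x + φ y := by
  rcases eq_or_ne x 0 with rfl | hx
  · simp
  · calc φ (x + y) = φ (x * (1 + x⁻¹ * y)) := by rw [mul_add, mul_one, mul_inv_cancel_left₀ hx]
      _ = φ x + φ x * φ (x⁻¹ * y) := by rw [map_mul, h, mul_add, mul_one]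
      _ = φ x + φ y := by rw [← map_mul, mul_inv_cancel_left₀ hx]

theorem exists_ringHom_of_map_one_add [Semiring L] (φ : K →*₀ L)
    (h : ∀ t, φ (1 + t) = 1 + φ t) : ∃ σ : K →+* L, ∀ x, σ x = φ x :=
  ⟨{ φ with map_add' := map_add_of_map_one_add φ h }, fun _ ↦ rfl⟩

theorem map_two_of_sub_one_mul_self_eq_one (φ : K →*₀ K) (h : (φ 2 - 1) * (φ 2 - 1) = 1) :
    φ 2 = 2 := by
  rcases mul_self_eq_one_iff.1 h with h_one | h_neg
  · rw [sub_eq_iff_eq_add.1 h_one, one_add_one_eq_two]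
  · have h_zero : φ 2 = 0 := by rw [sub_eq_iff_eq_add.1 h_neg, neg_add_cancel]
    rw [h_zero, (map_eq_zero φ).1 h_zero]

theorem map_one_add_of_sub_one_eq_mul (φ : K →*₀ K)
    (h : ∀ t, φ (1 + t) - 1 = (φ 2 - 1) * φ t) (t : K) : φ (1 + t) = 1 + φ t := by
  have h_neg : (φ 2 - 1) * φ (-1) = -1 := by simpa using (h (-1)).symm
  have h_sq : φ (-1) * φ (-1) = 1 := by simp [← map_mul]
  have h_two : φ 2 = 2 := by
    apply map_two_of_sub_one_mul_self_eq_one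
    have h_eq : φ 2 - 1 = -φ (-1) :=
      calc φ 2 - 1 = (φ 2 - 1) * φ (-1) * φ (-1) := by rw [mul_assoc, h_sq, mul_one]
        _ = -φ (-1) := by rw [h_neg, neg_one_mul]
    rw [h_eq, neg_mul_neg, h_sq]
  have h_t := h t
  rwa [h_two, ← one_add_one_eq_two, add_sub_cancel_right, one_mul, sub_eq_iff_eq_add'] at h_t

section Domain

variable [Ring L] [IsDomain L] {φ ψ : K →*₀ L}

theorem map_neg_one_eq_of_map_one_add_eq (h : ∀ t, φ (1 + t) = 1 + ψ t) :
    φ (-1) = ψ (-1) := by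
  have hψ : ψ (-1) = -1 := by
    have h_neg := h (-1)
    rw [add_neg_cancel, map_zero] at h_neg
    exact (neg_eq_of_add_eq_zero_right h_neg.symm).symm
  have h_sq : φ (-1) * φ (-1) = 1 := by simp [← map_mul]
  rcases mul_self_eq_one_iff.1 h_sq with h_one | h_neg
  · have h_zero : ψ (-2) = 0 := by
      have h_eq := h (-2)
      rw [show (1 + -2 : K) = -1 by norm_num, h_one] at h_eq
      exact left_eq_add.1 h_eq
    have h_two : (2 : K) = 0 := neg_eq_zero.1 ((map_eq_zero ψ).1 h_zero)
    have h_char : (-1 : K) = 1 := neg_eq_of_add_eq_zero_left (one_add_one_eq_two.trans h_two)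
    rw [h_char, map_one, map_one]
  · rw [h_neg, hψ]

theorem eq_of_map_one_add_eq (h : ∀ t, φ (1 + t) = 1 + ψ t) : φ = ψ := by
  ext x
  rcases eq_or_ne x 0 with rfl | hx
  · rw [map_zero, map_zero]
  rcases eq_or_ne (1 + x) 0 with hx_add | hx_add
  · rw [← neg_eq_of_add_eq_zero_right hx_add, map_neg_one_eq_of_map_one_add_eq h]
  have h_ne : 1 + ψ x ≠ 0 := h x ▸ (map_ne_zero φ).2 hx_add
  -- Expressing `φ (1 + x) = φ x * φ (1 + x⁻¹)` through `ψ` determines `φ x`.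
  have h_inv : 1 + ψ x = φ x * (1 + ψ x⁻¹) := by
    rw [← h, ← h, ← map_mul, mul_add, mul_one, mul_inv_cancel₀ hx, add_comm]
  apply mul_right_cancel₀ h_ne
  calc φ x * (1 + ψ x) = φ x * (1 + ψ x⁻¹) * ψ x := by
        rw [mul_assoc, add_mul, one_mul, ← map_mul, inv_mul_cancel₀ hx, map_one, add_comm]
    _ = ψ x * (1 + ψ x) := by rw [← h_inv, add_mul, mul_add, one_mul, mul_one]

end Domain

theorem map_one_add_of_sub_one_mul_sub_one_eq (φ : K →*₀ K)
    (h : ∀ a b, (φ (1 + a) - 1) * (φ (1 + b) - 1) = (φ 2 - 1) * (φ (1 + a * b) - 1)) (t : K) :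
    φ (1 + t) = 1 + φ t := by
  have h_two : φ 2 = 2 := by
    apply map_two_of_sub_one_mul_self_eq_one
    simpa [one_add_one_eq_two] using (h (-1) (-1)).symm
  let ψ : K →*₀ K :=
    { toFun a := φ (1 + a) - 1
      map_zero' := by simp
      map_one' := by rw [one_add_one_eq_two, h_two, ← one_add_one_eq_two, add_sub_cancel_right]
      map_mul' a b := by
        rw [h, h_two, ← one_add_one_eq_two, add_sub_cancel_right, one_mul] }
  have h_shift (a : K) : φ (1 + a) = 1 + ψ a := (add_sub_cancel 1 _).symm
  rw [h_shift, eq_of_map_one_add_eq h_shift]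

end MultiplicativeFunctions

/-- `F` maps every line through `p` into a line, "into a line" being encoded as `Collinear`. For
`q = p` the set `line[K, p, q]` is a point and the condition is void. -/
def MapsLinesThroughIntoLines (K : Type*) {E E' : Type*} [DivisionRing K] [AddCommGroup E]
    [Module K E] [AddCommGroup E'] [Module K E'] (F : E → E') (p : E) : Prop :=
  ∀ q, Collinear K (F '' line[K, p, q])

section Diagonal

variable {K ι : Type*} [Field K] {f : ι → K → K}

theorem sub_mul_sub_comm_of_collinear {s : Set (ι → K)} (hs : Collinear K s) {p x y : ι → K}
    (hp : p ∈ s) (hx : x ∈ s) (hy : y ∈ s) (i j : ι) :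
    (x i - p i) * (y j - p j) = (y i - p i) * (x j - p j) := by
  obtain ⟨v, hv⟩ := (collinear_iff_of_mem hp).1 hs
  obtain ⟨a, rfl⟩ := hv x hx
  obtain ⟨b, rfl⟩ := hv y hy
  simp only [vadd_eq_add, Pi.add_apply, Pi.smul_apply, smul_eq_mul]
  ring

theorem MapsLinesThroughIntoLines.sub_mul_sub_eq {p : ι → K}
    (h : MapsLinesThroughIntoLines K (Pi.map f) p) {i j : ι} (hij : i ≠ j) (a b : K) :
    (f i (p i + a) - f i (p i)) * (f j (p j + b) - f j (p j)) =
      (f i (p i + 1) - f i (p i)) * (f j (p j + a * b) - f j (p j)) := by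
  classical
  let v : ι → K := Function.update (fun _ ↦ b) i 1
  have h_mem (t : K) : Pi.map f (t • v + p) ∈ Pi.map f '' line[K, p, v + p] :=
    Set.mem_image_of_mem _ (vadd_left_mem_affineSpan_pair.2 ⟨t, by simp⟩)
  simpa [v, hij.symm, add_comm] using
    sub_mul_sub_comm_of_collinear (h (v + p)) (h_mem 0) (h_mem a) (h_mem 1) i j

theorem exists_monoidWithZeroHom_of_mapsLinesThroughIntoLines_zero [Nontrivial ι]
    (hf_zero : ∀ i, f i 0 = 0) (hf_one : ∀ i, f i 1 = 1)
    (h : MapsLinesThroughIntoLines K (Pi.map f) 0) : ∃ φ : K →*₀ K, ∀ i, f i = φ := by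
  have h_mul {i j : ι} (hij : i ≠ j) (a b : K) : f i a * f j b = f j (a * b) := by
    simpa [hf_zero, hf_one] using h.sub_mul_sub_eq hij a b
  have h_eq (i j : ι) : f i = f j := by
    rcases eq_or_ne i j with rfl | hij
    · rfl
    · funext a
      simpa [hf_one] using h_mul hij a 1
  obtain ⟨i, j, hij⟩ := exists_pair_ne ι
  refine ⟨⟨⟨f j, hf_zero j⟩, hf_one j, fun a b ↦ ?_⟩, fun k ↦ h_eq k j⟩
  change f j (a * b) = f j a * f j b
  rw [← h_mul hij, h_eq i j]

theorem map_one_add_of_mapsLinesThroughIntoLines {φ : K →*₀ K} {p : ι → K}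
    (h : MapsLinesThroughIntoLines K (Pi.map fun _ ↦ φ) p) {i j : ι} (hij : i ≠ j)
    (hi : p i = 1) (hj : p j = 0 ∨ p j = 1) (t : K) : φ (1 + t) = 1 + φ t := by
  have h_line := h.sub_mul_sub_eq hij
  rw [hi, map_one, one_add_one_eq_two] at h_line
  rcases hj with hj | hj
  · apply map_one_add_of_sub_one_eq_mul
    intro a
    simpa [hj] using h_line a 1
  · apply map_one_add_of_sub_one_mul_sub_one_eq
    simpa only [hj, map_one] using h_line

theorem exists_ringHom_of_mapsLinesThroughIntoLines [Nontrivial ι]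
    (hf_zero : ∀ i, f i 0 = 0) (hf_one : ∀ i, f i 1 = 1) {x₀ : ι → K} (hx₀ : x₀ ≠ 0)
    (hx₀01 : ∀ i, x₀ i = 0 ∨ x₀ i = 1) (h_zero : MapsLinesThroughIntoLines K (Pi.map f) 0)
    (h_x₀ : MapsLinesThroughIntoLines K (Pi.map f) x₀) : ∃ σ : K →+* K, ∀ i, f i = σ := by
  obtain ⟨φ, hφ⟩ :=
    exists_monoidWithZeroHom_of_mapsLinesThroughIntoLines_zero hf_zero hf_one h_zero
  obtain rfl : f = fun _ ↦ ⇑φ := funext hφ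
  obtain ⟨i, hi⟩ := Function.ne_iff.1 hx₀
  obtain ⟨j, hji⟩ := exists_ne i
  obtain ⟨σ, hσ⟩ := exists_ringHom_of_map_one_add φ <|
    map_one_add_of_mapsLinesThroughIntoLines h_x₀ hji.symm ((hx₀01 i).resolve_left hi) (hx₀01 j)
  exact ⟨σ, fun _ ↦ funext fun x ↦ (hσ x).symm⟩

theorem diagonal_id_of_lines_through_two_points_general [Nontrivial ι] [Subsingleton (K →+* K)]
    (hf_zero : ∀ i, f i 0 = 0) (hf_one : ∀ i, f i 1 = 1) {x₀ : ι → K} (hx₀ : x₀ ≠ 0)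
    (hx₀01 : ∀ i, x₀ i = 0 ∨ x₀ i = 1) (h_zero : MapsLinesThroughIntoLines K (Pi.map f) 0)
    (h_x₀ : MapsLinesThroughIntoLines K (Pi.map f) x₀) : Pi.map f = id := by
  obtain ⟨σ, hσ⟩ :=
    exists_ringHom_of_mapsLinesThroughIntoLines hf_zero hf_one hx₀ hx₀01 h_zero h_x₀
  funext x i
  rw [Pi.map_apply, hσ, Subsingleton.elim σ (RingHom.id K), RingHom.id_apply, id]

end Diagonal

section RealLines

variable {k : ℕ}

theorem IsLine.collinear {s : Set (Fin k → ℝ)} (hs : IsLine s) : Collinear ℝ s := by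
  obtain ⟨a, b, -, rfl⟩ := hs
  refine (collinear_iff_exists_forall_eq_smul_vadd _).2 ⟨a, b, ?_⟩
  rintro _ ⟨t, rfl⟩
  exact ⟨t, add_comm _ _⟩

theorem affineSpan_pair_subset_lineThru (p q : Fin k → ℝ) :
    (line[ℝ, p, q] : Set (Fin k → ℝ)) ⊆ lineThru p (q - p) := by
  intro x hx
  obtain ⟨t, rfl⟩ := mem_affineSpan_pair_iff_exists_lineMap_eq.1 hx
  exact ⟨t, by rw [AffineMap.lineMap_apply_module', add_comm]⟩

theorem mapsLinesThroughIntoLines_of_isLine {m : ℕ} {F : (Fin k → ℝ) → (Fin m → ℝ)}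
    {p : Fin k → ℝ} (h : ∀ b ≠ 0, ∃ l, IsLine l ∧ F '' lineThru p b ⊆ l) :
    MapsLinesThroughIntoLines ℝ F p := by
  intro q
  rcases eq_or_ne q p with rfl | hqp
  · simpa using collinear_singleton ℝ (F q)
  · obtain ⟨l, hl, hFl⟩ := h (q - p) (sub_ne_zero.2 hqp)
    exact hl.collinear.subset ((Set.image_mono (affineSpan_pair_subset_lineThru p q)).trans hFl)

end RealLines

/-- **Proposition (a diagonal bijection preserving lines through `0` and through a
0/1-vector is the identity).** Let `n ≥ 2` and let `F : ℝⁿ → ℝⁿ` be a bijection of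
the form `F x = ∑ fᵢ (xᵢ) • eᵢ` with each `fᵢ` a bijection, `fᵢ 0 = 0`, `fᵢ 1 = 1`.
Let `x₀ ≠ 0` have all coordinates `0` or `1`. If `F` maps every line through the
origin and every line through `x₀` into a line, then `F` is the identity. -/
theorem diagonal_id_of_lines_through_two_points
    {n : ℕ} (hn : 2 ≤ n)
    (F : (Fin n → ℝ) → (Fin n → ℝ)) (hbij : Function.Bijective F)
    (f : Fin n → ℝ → ℝ)
    (hf : ∀ i, Function.Bijective (f i) ∧ f i 0 = 0 ∧ f i 1 = 1)
    (hF : ∀ x : Fin n → ℝ, F x = ∑ i, f i (x i) • (Pi.single i 1 : Fin n → ℝ))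
    (x₀ : Fin n → ℝ) (hx₀ : x₀ ≠ 0) (hx₀01 : ∀ i, x₀ i = 0 ∨ x₀ i = 1)
    (hline0 : ∀ b : Fin n → ℝ, b ≠ 0 →
      ∃ l : Set (Fin n → ℝ), IsLine l ∧ F '' lineThru 0 b ⊆ l)
    (hlinex : ∀ b : Fin n → ℝ, b ≠ 0 →
      ∃ l : Set (Fin n → ℝ), IsLine l ∧ F '' lineThru x₀ b ⊆ l) :
    ∀ x : Fin n → ℝ, F x = x := by
  have h_diag : F = Pi.map f := by
    funext x i
    simp [hF, Pi.single_apply]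
  subst h_diag
  have : Nontrivial (Fin n) := Fin.nontrivial_iff_two_le.2 hn
  exact congrFun <| diagonal_id_of_lines_through_two_points_general (fun i ↦ (hf i).2.1)
    (fun i ↦ (hf i).2.2) hx₀ hx₀01 (mapsLinesThroughIntoLines_of_isLine hline0)
    (mapsLinesThroughIntoLines_of_isLine hlinex)
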